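/- Let f : 𝖱^n → 𝖱 be continuous, let I ⊆ N = {1,…,n} be nonempty, and suppose f is I-cofinal. Then the set {α < ω₁ : f(A_I^+(α)) ⊆ [α, ω₁) and f(A_I^-(α)) ⊆ [0,α]} is a closed unbounded subset of ω₁. -/

import Mathlib

noncomputable section
open Set

/-- The first uncountable ordinal `ω₁`. -/
def Omega1 : Ordinal := Ordinal.omega 1

/-- The closed long ray `𝖱`: `ω₁ × [0,1)` with the lexicographic order. -/
def LongRay : Type 1 := {o : Ordinal // o < Omega1} ×ₗ (Set.Ico (0:ℝ) 1)

instance : LinearOrder LongRay :=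
  inferInstanceAs (LinearOrder ({o : Ordinal // o < Omega1} ×ₗ (Set.Ico (0:ℝ) 1)))

/-- `𝖱` carries the order topology. -/
instance : TopologicalSpace LongRay := Preorder.topology LongRay
instance : OrderTopology LongRay := ⟨rfl⟩

lemma omega1_pos : (0 : Ordinal) < Omega1 := Ordinal.omega_pos 1

/-- The point `0 = (0,0)` of the long ray. -/
def rayZero : LongRay := toLex (⟨0, omega1_pos⟩, ⟨0, by simp⟩)

/-- Identification of the countable ordinal `o` with the point `(o,0)` of the long ray
(junk value for `o ≥ ω₁`). -/
def ordR (o : Ordinal) : LongRay :=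
  if h : o < Omega1 then toLex (⟨o, h⟩, ⟨0, by simp⟩) else rayZero

/-- The `I`-diagonal at height `c` (only the values of `c` off `I` are relevant). -/
def Delta (n : ℕ) (I : Finset (Fin n)) (c : Fin n → LongRay) : Set (Fin n → LongRay) :=
  {x | (∀ i ∈ I, ∀ i' ∈ I, x i = x i') ∧ ∀ j ∉ I, x j = c j}

/-- `f` is `I`-cofinal if `f` restricted to `Δ_I = Δ_I(0)` is unbounded. -/
def ICofinal (n : ℕ) (f : (Fin n → LongRay) → LongRay) (I : Finset (Fin n)) : Prop :=
  ¬ BddAbove (f '' Delta n I (fun _ => rayZero))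

/-- The cofinality class `𝔠(f) = {I : f is I-cofinal}`. -/
def cofClass (n : ℕ) (f : (Fin n → LongRay) → LongRay) : Set (Finset (Fin n)) :=
  {I | ICofinal n f I}

/-- `M_I(c) = {x : x_i ≥ c for all i ∈ I}`. -/
def MSet (n : ℕ) (I : Finset (Fin n)) (c : LongRay) : Set (Fin n → LongRay) :=
  {x | ∀ i ∈ I, c ≤ x i}

/-- `E_I(b,d) = {x ∈ M_I(d) : x_j = b_j for all j ∉ I}`. -/
def ESet (n : ℕ) (I : Finset (Fin n)) (b : Fin n → LongRay) (d : LongRay) :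
    Set (Fin n → LongRay) :=
  {x | (∀ i ∈ I, d ≤ x i) ∧ ∀ j ∉ I, x j = b j}

/-- `A_I^-(α) = {x : x_i ≤ α ∀ i ∈ I, and x_j ≤ max_{i ∈ I} x_i ∀ j}`. -/
def AMinus (n : ℕ) (I : Finset (Fin n)) (a : LongRay) : Set (Fin n → LongRay) :=
  {x | (∀ i ∈ I, x i ≤ a) ∧ ∀ j, ∃ i ∈ I, x j ≤ x i}

/-- `A_I^+(α) = {x : x_i ≥ α ∀ i ∈ I, and x_j ≤ max_{i ∈ I} x_i ∀ j}`. -/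
def APlus (n : ℕ) (I : Finset (Fin n)) (a : LongRay) : Set (Fin n → LongRay) :=
  {x | (∀ i ∈ I, a ≤ x i) ∧ ∀ j, ∃ i ∈ I, x j ≤ x i}

section

open Filter Topology

/-! ### Order structure of the long ray -/

/-- The ordinal coordinate of a point of the long ray. -/
def LongRay.ord (p : LongRay) : {o : Ordinal // o < Omega1} := (ofLex p).1

/-- The real coordinate of a point of the long ray. -/
def LongRay.frac (p : LongRay) : Set.Ico (0 : ℝ) 1 := (ofLex p).2

/-- The point of the long ray with given coordinates. -/
def LongRay.mk (o : {o : Ordinal // o < Omega1}) (r : Set.Ico (0 : ℝ) 1) : LongRay := toLex (o, r)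

open LongRay

lemma LongRay.lt_def {p q : LongRay} : p < q ↔ p.ord < q.ord ∨ p.ord = q.ord ∧ p.frac < q.frac :=
  Prod.Lex.lt_iff

lemma LongRay.le_def {p q : LongRay} : p ≤ q ↔ p.ord < q.ord ∨ p.ord = q.ord ∧ p.frac ≤ q.frac :=
  Prod.Lex.le_iff

lemma LongRay.exists_isGLB {s : Set LongRay} (hs : s.Nonempty) : ∃ a, IsGLB s a := by
  obtain ⟨p, hp, hmin⟩ := (wellFounded_lt.onFun (f := ord)).has_min s hs
  have hmin' : ∀ q ∈ s, p.ord ≤ q.ord := fun q hq ↦ not_lt.1 (hmin q hq)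
  set T : Set ℝ := {r | ∃ q ∈ s, q.ord = p.ord ∧ (q.frac : ℝ) = r}
  have hTn : T.Nonempty := ⟨_, p, hp, rfl, rfl⟩
  have hTb : BddBelow T := ⟨0, by rintro _ ⟨q, -, -, rfl⟩; exact q.frac.2.1⟩
  have h0 : 0 ≤ sInf T := le_csInf hTn (by rintro _ ⟨q, -, -, rfl⟩; exact q.frac.2.1)
  have h1 : sInf T < 1 := (csInf_le hTb ⟨p, hp, rfl, rfl⟩).trans_lt p.frac.2.2
  refine ⟨mk p.ord ⟨sInf T, h0, h1⟩, fun q hq ↦ le_def.2 ?_, fun m hm ↦ le_def.2 ?_⟩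
  · rcases (hmin' q hq).lt_or_eq with h | h
    · exact .inl h
    · exact .inr ⟨h, csInf_le hTb ⟨q, hq, h.symm, rfl⟩⟩
  · have hmp : m.ord ≤ p.ord := (le_def.1 (hm hp)).elim le_of_lt fun h ↦ h.1.le
    rcases hmp.lt_or_eq with h | h
    · exact .inl h
    · refine .inr ⟨h, ?_⟩
      refine Subtype.coe_le_coe.1 (le_csInf hTn ?_)
      rintro _ ⟨q, hq, hqp, rfl⟩
      rcases le_def.1 (hm hq) with h' | h'
      · exact absurd h' (by rw [hqp, h]; exact lt_irrefl _)
      · exact h'.2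

lemma LongRay.rayZero_le (p : LongRay) : rayZero ≤ p := by
  refine le_def.2 ?_
  rcases (zero_le : 0 ≤ (p.ord : Ordinal)).lt_or_eq with h | h
  · exact .inl h
  · exact .inr ⟨Subtype.ext h, p.frac.2.1⟩

local instance : Nonempty LongRay := ⟨rayZero⟩

open scoped Classical in
local instance : InfSet LongRay :=
  ⟨fun s ↦ if hs : s.Nonempty then (exists_isGLB hs).choose else rayZero⟩

local instance : ConditionallyCompleteLinearOrder LongRay where
  __ := (inferInstance : LinearOrder LongRay)
  __ := LinearOrder.toLattice
  __ := conditionallyCompleteLatticeOfLatticeOfsInf LongRay fun s _ hn ↦ by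
    have : sInf s = (exists_isGLB hn).choose := dif_pos hn
    rw [this]
    exact (exists_isGLB hn).choose_spec
  csSup_of_not_bddAbove s hs := by
    have h : ¬ (upperBounds s).Nonempty := hs
    have e : sInf (upperBounds s) = rayZero := dif_neg h
    refine e.trans (Eq.symm ?_)
    refine le_antisymm ?_ (rayZero_le _)
    have h' : (upperBounds (∅ : Set LongRay)).Nonempty := by simp
    have e' : sInf (upperBounds (∅ : Set LongRay)) = (exists_isGLB h').choose := dif_pos h'
    exact e'.le.trans ((exists_isGLB h').choose_spec.1 (by simp))
  csInf_of_not_bddBelow s hs := (hs ⟨rayZero, fun p _ ↦ rayZero_le p⟩).elim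

/-- The points of the long ray with ordinal coordinate at most `o` and rational real coordinate. -/
def LongRay.ratPoints (o : {o : Ordinal // o < Omega1}) : Set LongRay :=
  {p | p.ord ≤ o ∧ ∃ q : ℚ, (p.frac : ℝ) = q}

lemma LongRay.exists_ratPoints_between {o : {o : Ordinal // o < Omega1}} {x y : LongRay} (h : x < y)
    (hx : x.ord ≤ o) : ∃ d ∈ ratPoints o, x < d ∧ d < y := by
  have key : ∀ u : ℝ, (x.frac : ℝ) < u → u ≤ 1 → ∃ d ∈ ratPoints o, d.ord = x.ord ∧
      x.frac < d.frac ∧ (d.frac : ℝ) < u := by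
    intro u hu hu1
    obtain ⟨q, hq, hqu⟩ := exists_rat_btwn hu
    exact ⟨mk x.ord ⟨q, x.frac.2.1.trans hq.le, hqu.trans_le hu1⟩, ⟨hx, q, rfl⟩, rfl, hq, hqu⟩
  rcases lt_def.1 h with h | ⟨h, h'⟩
  · obtain ⟨d, hd, hdx, hlt, -⟩ := key 1 x.frac.2.2 le_rfl
    exact ⟨d, hd, lt_def.2 (.inr ⟨hdx.symm, hlt⟩), lt_def.2 (.inl (hdx ▸ h))⟩
  · obtain ⟨d, hd, hdx, hlt, hlt'⟩ := key y.frac h' y.frac.2.2.le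
    exact ⟨d, hd, lt_def.2 (.inr ⟨hdx.symm, hlt⟩), lt_def.2 (.inr ⟨hdx.trans h, hlt'⟩)⟩

lemma LongRay.countable_Iic_ord (o : {o : Ordinal // o < Omega1}) : (Iic o).Countable := by
  have h : (Iio (o.1 + 1)).Countable := by
    rw [← Cardinal.le_aleph0_iff_set_countable, Cardinal.mk_Iio_ordinal, Cardinal.lift_le_aleph0,
      ← Cardinal.lt_aleph_one_iff, ← Cardinal.lt_omega_iff_card_lt]
    exact (Cardinal.isSuccLimit_omega 1).succ_lt o.2
  refine (h.preimage Subtype.val_injective).mono fun p hp ↦ ?_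
  exact Order.lt_succ_of_le (show p.1 ≤ o.1 from hp)

lemma LongRay.countable_ratPoints (o : {o : Ordinal // o < Omega1}) : (ratPoints o).Countable := by
  have h : (Iic o ×ˢ (univ : Set ℚ)).Countable := (countable_Iic_ord o).prod countable_univ
  have : MapsTo (fun p : LongRay ↦ (p.ord, (p.frac : ℝ))) (ratPoints o)
      (Prod.map id (fun q : ℚ ↦ (q : ℝ)) '' (Iic o ×ˢ univ)) := by
    rintro p ⟨hp, q, hq⟩
    exact ⟨(p.ord, q), ⟨hp, trivial⟩, by simp [hq]⟩
  refine this.countable_of_injOn ?_ (h.image _)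
  intro p _ q _ hpq
  simp only [Prod.mk.injEq] at hpq
  exact ofLex.injective (Prod.ext hpq.1 (Subtype.ext hpq.2))

local instance : DenselyOrdered LongRay where
  dense _ _ h :=
    let ⟨d, _, hd⟩ := exists_ratPoints_between h le_rfl
    ⟨d, hd⟩

local instance : FirstCountableTopology LongRay where
  nhds_generated_countable p := by
    have hc (s : Set LongRay) : Countable ↥(ratPoints p.ord ∩ s) :=
      ((countable_ratPoints p.ord).mono inter_subset_left).to_subtype
    have e : 𝓝 p = (⨅ d : ↥(ratPoints p.ord ∩ Iio p), 𝓟 (Ioi d.1)) ⊓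
        ⨅ d : ↥(ratPoints p.ord ∩ Ioi p), 𝓟 (Iio d.1) := by
      rw [nhds_eq_order]
      refine le_antisymm (inf_le_inf ?_ ?_) (inf_le_inf ?_ ?_)
      · exact le_iInf fun d ↦ iInf₂_le d.1 d.2.2
      · exact le_iInf fun d ↦ iInf₂_le d.1 d.2.2
      · refine le_iInf₂ fun b hb ↦ ?_
        have hb' : b.ord ≤ p.ord := (le_def.1 (le_of_lt hb)).elim le_of_lt fun h ↦ h.1.le
        obtain ⟨d, hd, hbd, hdp⟩ := exists_ratPoints_between hb hb'
        exact (iInf_le _ ⟨d, hd, hdp⟩).trans (principal_mono.2 (Ioi_subset_Ioi hbd.le))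
      · refine le_iInf₂ fun b hb ↦ ?_
        obtain ⟨d, hd, hpd, hdb⟩ := exists_ratPoints_between (show p < b from hb) le_rfl
        exact (iInf_le _ ⟨d, hd, hpd⟩).trans (principal_mono.2 (Iio_subset_Iio hdb.le))
    rw [e]
    infer_instance

lemma ord_ordR {o : Ordinal} (h : o < Omega1) : ((ordR o).ord : Ordinal) = o := by
  simp [ordR, h, LongRay.ord]

lemma lt_ordR_iff {o : Ordinal} (h : o < Omega1) {p : LongRay} :
    p < ordR o ↔ (p.ord : Ordinal) < o := by
  rw [lt_def, ← Subtype.coe_lt_coe, ord_ordR h]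
  refine or_iff_left ?_
  rintro ⟨-, h'⟩
  have : ((ordR o).frac : ℝ) = 0 := by simp [ordR, h, LongRay.frac]
  have h'' : (p.frac : ℝ) < (ordR o).frac := h'
  exact (h''.trans_eq this).not_ge p.frac.2.1

lemma ordR_le_ordR {o o' : Ordinal} (h : o ≤ o') (h' : o' < Omega1) : ordR o ≤ ordR o' := by
  rw [← not_lt, lt_ordR_iff (h.trans_lt h'), ord_ordR h', not_lt]
  exact h

lemma exists_lt_ordR (p : LongRay) : ∃ o < Omega1, p < ordR o := by
  have h : (p.ord : Ordinal) + 1 < Omega1 := (Cardinal.isSuccLimit_omega 1).succ_lt p.ord.2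
  exact ⟨_, h, (lt_ordR_iff h).2 (lt_add_one _)⟩

lemma sSup_lt_Omega1 {T : Set Ordinal} (hT : ∀ o ∈ T, o < Omega1) (hc : T.Countable) :
    sSup T < Omega1 := by
  have := hc.to_subtype
  rw [sSup_eq_iSup']
  exact Ordinal.iSup_lt_omega_one fun o ↦ hT o o.2

lemma isLUB_ordR_sSup {T : Set Ordinal} (hT : ∀ o ∈ T, o < Omega1) (hc : T.Countable)
    (hn : T.Nonempty) : IsLUB (ordR '' T) (ordR (sSup T)) := by
  have hs := sSup_lt_Omega1 hT hc
  have hb : BddAbove T := ⟨Omega1, fun o ho ↦ (hT o ho).le⟩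
  refine ⟨forall_mem_image.2 fun o ho ↦ ordR_le_ordR (le_csSup hb ho) hs, fun b hb' ↦ ?_⟩
  by_contra! h
  obtain ⟨o, ho, hlt⟩ := exists_lt_of_lt_csSup hn ((lt_ordR_iff hs).1 h)
  exact ((lt_ordR_iff (hT o ho)).2 hlt).not_ge (hb' (mem_image_of_mem _ ho))

local instance : NoMaxOrder LongRay where
  exists_gt p := let ⟨_, _, h⟩ := exists_lt_ordR p; ⟨_, h⟩

lemma bddAbove_range_nat (u : ℕ → LongRay) : BddAbove (range u) := by
  choose o ho hlt using fun k ↦ exists_lt_ordR (u k)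
  have hT : ∀ a ∈ range o, a < Omega1 := forall_mem_range.2 ho
  refine ⟨ordR (sSup (range o)), forall_mem_range.2 fun k ↦ (hlt k).le.trans ?_⟩
  exact (isLUB_ordR_sSup hT (countable_range o) (range_nonempty o)).1 ⟨_, mem_range_self k, rfl⟩

/-- In the long ray, a countable chain of approximations can always be completed to a limit. -/
lemma exists_monotone_tendsto {R : ℕ → LongRay → LongRay → Prop}
    (hR : ∀ k b, ∃ c, b ≤ c ∧ R k b c) (b : LongRay) :
    ∃ (a : ℕ → LongRay) (l : LongRay), b ≤ l ∧ (∀ k, a k ≤ l) ∧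
      (∀ k, R k (a k) (a (k + 1))) ∧ Tendsto a atTop (𝓝 l) := by
  choose g hg hRg using hR
  let a : ℕ → LongRay := fun k ↦ Nat.rec b (fun k x ↦ g k x) k
  have hm : Monotone a := monotone_nat_of_le_succ fun k ↦ hg k (a k)
  have hb := bddAbove_range_nat a
  exact ⟨a, ⨆ k, a k, le_ciSup hb 0, le_ciSup hb, fun k ↦ hRg k (a k), tendsto_atTop_ciSup hm hb⟩

/-! ### Closed sets and unboundedness -/

lemma tendsto_of_chain {a u : ℕ → LongRay} {l : LongRay} (ha : Tendsto a atTop (𝓝 l))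
    (hau : ∀ k, a k ≤ u k) (hua : ∀ k, u k ≤ a (k + 1)) : Tendsto u atTop (𝓝 l) :=
  tendsto_of_tendsto_of_tendsto_of_le_of_le ha ((tendsto_add_atTop_iff_nat 1).2 ha) hau hua

lemma frequently_fiber_of_isClosed {X : Type*} [TopologicalSpace X] [FirstCountableTopology X]
    {Z : Set (LongRay × X)} (hZ : IsClosed Z) {c : X}
    (h : ∃ᶠ p in atTop ×ˢ 𝓝 c, p ∈ Z) : ∃ᶠ t in atTop, (t, c) ∈ Z := by
  refine frequently_atTop.2 fun b ↦ ?_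
  obtain ⟨U, hU⟩ := (𝓝 c).exists_antitone_basis
  have hR : ∀ (k : ℕ) (b : LongRay), ∃ d, b ≤ d ∧ ∃ x ∈ U k, (d, x) ∈ Z := by
    intro k b
    have := h.and_eventually (prod_mem_prod (Ici_mem_atTop b) (hU.1.mem_of_mem (i := k) trivial))
    obtain ⟨⟨d, x⟩, hdx, hd, hx⟩ := this.exists
    exact ⟨d, hd, x, hx, hdx⟩
  obtain ⟨a, l, hbl, -, hRa, hal⟩ := exists_monotone_tendsto hR b
  choose x hxU hxZ using hRa
  exact ⟨l, hbl, hZ.mem_of_tendsto (((tendsto_add_atTop_iff_nat 1).2 hal).prodMk_nhds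
    (hU.tendsto hxU)) (.of_forall hxZ)⟩

lemma inter_nonempty_of_frequently {Z Z' : Set LongRay} (hZ : IsClosed Z) (hZ' : IsClosed Z')
    (h : ∃ᶠ t in atTop, t ∈ Z) (h' : ∃ᶠ t in atTop, t ∈ Z') : (Z ∩ Z').Nonempty := by
  have hR : ∀ (k : ℕ) (b : LongRay), ∃ d, b ≤ d ∧ ∃ t ∈ Z, ∃ t' ∈ Z',
      b ≤ t ∧ t ≤ t' ∧ t' ≤ d := by
    intro _ b
    obtain ⟨t, hbt, ht⟩ := frequently_atTop.1 h b
    obtain ⟨t', htt', ht'⟩ := frequently_atTop.1 h' t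
    exact ⟨t', hbt.trans htt', t, ht, t', ht', hbt, htt', le_rfl⟩
  obtain ⟨a, l, -, -, hRa, hal⟩ := exists_monotone_tendsto hR rayZero
  choose t ht t' ht' hbt htt' htd using hRa
  exact ⟨l, hZ.mem_of_tendsto (tendsto_of_chain hal hbt fun k ↦ (htt' k).trans (htd k))
    (.of_forall ht), hZ'.mem_of_tendsto (tendsto_of_chain hal (fun k ↦ (hbt k).trans (htt' k)) htd)
    (.of_forall ht')⟩

/-! ### Cofinality along shifted diagonals -/

/-- The point of the `J`-diagonal at height `c` whose `J`-coordinates are equal to `t`. -/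
def diagPoint {n : ℕ} (J : Finset (Fin n)) (t : LongRay) (c : Fin n → LongRay) :
    Fin n → LongRay :=
  fun i ↦ if i ∈ J then t else c i

lemma continuous_diagPoint {n : ℕ} (J : Finset (Fin n)) :
    Continuous fun p : LongRay × (Fin n → LongRay) ↦ diagPoint J p.1 p.2 := by
  refine continuous_pi fun i ↦ ?_
  by_cases hi : i ∈ J
  · simpa [diagPoint, hi] using continuous_fst
  · simpa [diagPoint, hi] using
      (by fun_prop : Continuous fun p : LongRay × (Fin n → LongRay) ↦ p.2 i)

/-- `f` is unbounded on the `J`-diagonal at height `c`. -/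
def CofinalAt {n : ℕ} (f : (Fin n → LongRay) → LongRay) (J : Finset (Fin n))
    (c : Fin n → LongRay) : Prop :=
  ∀ z, ∃ᶠ t in atTop, z ≤ f (diagPoint J t c)

lemma exists_forall_le_on_box {n : ℕ} {f : (Fin n → LongRay) → LongRay} (hf : Continuous f)
    (b : LongRay) :
    ∃ M, ∀ x, (∀ j, x j ≤ b) → f x ≤ M := by
  have hK : IsCompact (Set.pi univ fun _ : Fin n ↦ Icc rayZero b) :=
    isCompact_univ_pi fun _ ↦ isCompact_Icc
  obtain ⟨M, hM⟩ := (hK.image hf).bddAbove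
  exact ⟨M, fun x hx ↦ hM ⟨x, fun j _ ↦ ⟨rayZero_le _, hx j⟩, rfl⟩⟩

lemma ICofinal.cofinalAt {n : ℕ} {f : (Fin n → LongRay) → LongRay} (hf : Continuous f)
    {I : Finset (Fin n)} (h : ICofinal n f I) :
    CofinalAt f I fun _ ↦ rayZero := by
  refine fun z ↦ frequently_atTop.2 fun b ↦ ?_
  obtain ⟨M, hM⟩ := exists_forall_le_on_box hf b
  obtain ⟨_, ⟨x, ⟨hxI, hx0⟩, rfl⟩, hlt⟩ := not_bddAbove_iff.1 h (max z M)
  obtain ⟨j, hj⟩ : ∃ j, b < x j := by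
    by_contra! hx
    exact (hM x hx).not_gt ((le_max_right z M).trans_lt hlt)
  have hjI : j ∈ I := by
    by_contra hjI
    exact (hx0 j hjI ▸ hj).not_ge (rayZero_le b)
  have hx : diagPoint I (x j) (fun _ ↦ rayZero) = x := by
    funext i
    by_cases hi : i ∈ I
    · simpa [diagPoint, hi] using hxI j hjI i hi
    · simpa [diagPoint, hi] using (hx0 i hi).symm
  exact ⟨x j, hj.le, hx.symm ▸ (le_max_left z M).trans hlt.le⟩

lemma CofinalAt.eventually_lt {n : ℕ} {f : (Fin n → LongRay) → LongRay} (hf : Continuous f)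
    {J : Finset (Fin n)} {c : Fin n → LongRay} (h : CofinalAt f J c)
    (z : LongRay) : ∀ᶠ p in atTop ×ˢ 𝓝 c, z < f (diagPoint J p.1 p.2) := by
  by_contra hz
  have hg := hf.comp (continuous_diagPoint J)
  have hg' : Continuous fun t ↦ f (diagPoint J t c) :=
    hg.comp (by fun_prop : Continuous fun t ↦ (t, c))
  have h1 : ∃ᶠ p in atTop ×ˢ 𝓝 c, p ∈ {p | f (diagPoint J p.1 p.2) ≤ z} := by
    simpa only [mem_ofPred_eq, not_eventually, not_lt] using hz
  have h2 := frequently_fiber_of_isClosed (isClosed_le hg continuous_const) h1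
  obtain ⟨z', hz'⟩ := exists_gt z
  obtain ⟨t, ht, ht'⟩ := inter_nonempty_of_frequently (isClosed_le hg' continuous_const)
    (isClosed_le continuous_const hg') h2 (h z')
  exact (hz'.trans_le (le_trans ht' ht)).false

lemma isClopen_cofinalAt {n : ℕ} {f : (Fin n → LongRay) → LongRay} (hf : Continuous f)
    (J : Finset (Fin n)) : IsClopen {c | CofinalAt f J c} := by
  have hg := hf.comp (continuous_diagPoint J)
  constructor
  · refine isClosed_of_closure_subset fun c hc z ↦ ?_
    refine frequently_fiber_of_isClosed (Z := {p | z ≤ f (diagPoint J p.1 p.2)})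
      (isClosed_le continuous_const hg) ?_
    intro hev
    obtain ⟨U, hU, V, hV, hUV⟩ := mem_prod_iff.1 hev
    obtain ⟨c', hc'V, hc'⟩ := mem_closure_iff_nhds.1 hc V hV
    obtain ⟨t, ht, htU⟩ := ((hc' z).and_eventually hU).exists
    exact hUV (show (t, c') ∈ U ×ˢ V from ⟨htU, hc'V⟩) ht
  · rw [← isClosed_compl_iff]
    refine isClosed_of_closure_subset fun c hc hcof ↦ ?_
    obtain ⟨u, hu, huc⟩ := mem_closure_iff_seq_limit.1 hc
    have hbd : ∀ k, ∃ z, ∀ᶠ t in atTop, f (diagPoint J t (u k)) < z := by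
      intro k
      simpa [CofinalAt] using hu k
    choose z hz using hbd
    obtain ⟨w, hw⟩ := bddAbove_range_nat z
    obtain ⟨U, hU, V, hV, hUV⟩ := mem_prod_iff.1 (hcof.eventually_lt hf w)
    obtain ⟨k, hk⟩ := (huc.eventually hV).exists
    obtain ⟨t, ht, htU⟩ := ((hz k).and hU).exists
    exact (ht.trans_le (hw ⟨k, rfl⟩)).not_gt (hUV (show (t, u k) ∈ U ×ˢ V from ⟨htU, hk⟩))

lemma CofinalAt.change_height {n : ℕ} {f : (Fin n → LongRay) → LongRay} (hf : Continuous f)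
    {J : Finset (Fin n)} {c : Fin n → LongRay} (h : CofinalAt f J c)
    (c' : Fin n → LongRay) : CofinalAt f J c' := by
  have := (isClopen_cofinalAt hf J).eq_univ ⟨c, h⟩
  exact this.ge (mem_univ c')

lemma CofinalAt.mono {n : ℕ} {f : (Fin n → LongRay) → LongRay} (hf : Continuous f)
    {I J : Finset (Fin n)} {c : Fin n → LongRay} (h : CofinalAt f I c)
    (hIJ : I ⊆ J) : CofinalAt f J c := by
  refine fun z ↦ frequently_atTop.2 fun b ↦ ?_
  have hR : ∀ (k : ℕ) (b : LongRay), ∃ d, b ≤ d ∧ z ≤ f (diagPoint I d (diagPoint J b c)) :=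
    fun _ b ↦ frequently_atTop.1 (h.change_height hf _ z) b
  obtain ⟨a, l, hbl, -, hRa, hal⟩ := exists_monotone_tendsto hR b
  refine ⟨l, hbl, ?_⟩
  have hlim : Tendsto (fun k ↦ diagPoint I (a (k + 1)) (diagPoint J (a k) c)) atTop
      (𝓝 (diagPoint J l c)) := by
    refine tendsto_pi_nhds.2 fun i ↦ ?_
    by_cases hiI : i ∈ I
    · simpa [diagPoint, hiI, hIJ hiI] using (tendsto_add_atTop_iff_nat 1).2 hal
    · by_cases hiJ : i ∈ J
      · simpa [diagPoint, hiI, hiJ] using hal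
      · simp [diagPoint, hiI, hiJ]
  exact ge_of_tendsto' ((hf.tendsto _).comp hlim) hRa

lemma exists_diagonal_le {n : ℕ} {f : (Fin n → LongRay) → LongRay} (hf : Continuous f)
    {J : Finset (Fin n)} {z : LongRay}
    (h : ∀ b, ∃ x, (∀ i ∈ J, b ≤ x i) ∧ f x ≤ z) (b : LongRay) :
    ∃ t ≥ b, ∃ y, (∀ i ∈ J, y i = t) ∧ f y ≤ z := by
  have hR : ∀ (k : ℕ) (b : LongRay), ∃ d, b ≤ d ∧ ∃ x : Fin n → LongRay,
      (∀ i ∈ J, b ≤ x i) ∧ (∀ j, x j ≤ d) ∧ f x ≤ z := by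
    intro _ b
    obtain ⟨x, hx, hfx⟩ := h b
    obtain ⟨d, hd⟩ := (finite_range x).bddAbove
    exact ⟨max b d, le_max_left _ _, x, hx, fun j ↦ (hd ⟨j, rfl⟩).trans (le_max_right _ _), hfx⟩
  obtain ⟨a, l, hbl, hle, hRa, hal⟩ := exists_monotone_tendsto hR b
  choose x hax hxa hfx using hRa
  have hK : IsCompact (Set.pi univ fun _ : Fin n ↦ Icc rayZero l) :=
    isCompact_univ_pi fun _ ↦ isCompact_Icc
  obtain ⟨y, -, φ, hφ, hy⟩ := hK.tendsto_subseq (x := x)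
    fun k j _ ↦ ⟨rayZero_le _, (hxa k j).trans (hle _)⟩
  refine ⟨l, hbl, y, fun i hi ↦ ?_, le_of_tendsto' ((hf.tendsto _).comp hy) fun k ↦ hfx _⟩
  have hxl := tendsto_of_chain hal (fun k ↦ hax k i hi) fun k ↦ hxa k i
  exact tendsto_nhds_unique (tendsto_pi_nhds.1 hy i) (hxl.comp hφ.tendsto_atTop)

/-- If `f` is cofinal along the `I`-diagonal, then `f` is large as soon as all the
`I`-coordinates are large. -/
lemma CofinalAt.exists_forall_lt {n : ℕ} {f : (Fin n → LongRay) → LongRay} (hf : Continuous f)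
    {I : Finset (Fin n)} {c : Fin n → LongRay}
    (h : CofinalAt f I c) (z : LongRay) : ∃ b, ∀ x, (∀ i ∈ I, b ≤ x i) → z < f x := by
  by_contra! hI
  obtain ⟨J, hIJ, hJ⟩ := Finite.exists_le_maximal
    (p := fun J : Finset (Fin n) ↦ ∀ b, ∃ x, (∀ i ∈ J, b ≤ x i) ∧ f x ≤ z) hI
  have hmax : ∀ j, ∃ b, j ∉ J → ∀ x, (∀ i ∈ insert j J, b ≤ x i) → z < f x := by
    intro j
    by_contra! hj
    have hjJ := (hj rayZero).1
    exact hjJ (hJ.2 (fun b ↦ (hj b).2) (Finset.subset_insert j J) (Finset.mem_insert_self j J))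
  choose b hb using hmax
  obtain ⟨m, hm⟩ := (finite_range b).bddAbove
  have hbm : ∀ j, b j ≤ m := fun j ↦ hm ⟨j, rfl⟩
  have hK : IsCompact (Set.pi univ fun _ : Fin n ↦ Icc rayZero m) :=
    isCompact_univ_pi fun _ ↦ isCompact_Icc
  have hev := hK.mem_prod_nhdsSet_of_forall (l := atTop)
    (s := {p : LongRay × (Fin n → LongRay) | z < f (diagPoint J p.1 p.2)})
    fun c' _ ↦ ((h.mono hf hIJ).change_height hf c').eventually_lt hf z
  obtain ⟨U, hU, V, hV, hUV⟩ := mem_prod_iff.1 hev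
  obtain ⟨d, hd⟩ := mem_atTop_sets.1 hU
  obtain ⟨t, ht, y, hyJ, hyz⟩ := exists_diagonal_le hf hJ.1 (max d m)
  have hdt : d ≤ t := (le_max_left _ _).trans ht
  have hmt : m ≤ t := (le_max_right _ _).trans ht
  have hy : diagPoint J t (fun j ↦ min (y j) m) = y := by
    funext j
    by_cases hj : j ∈ J
    · simp [diagPoint, hj, hyJ]
    · have : y j ≤ m := by
        by_contra! hlt
        refine (hb j hj y fun i hi ↦ ?_).not_ge hyz
        rcases Finset.mem_insert.1 hi with rfl | hi
        · exact (hbm _).trans hlt.le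
        · exact (hbm _).trans (hmt.trans_eq (hyJ i hi).symm)
      simpa [diagPoint, hj] using this
  have hmem : (t, fun j ↦ min (y j) m) ∈ U ×ˢ V :=
    ⟨hd t hdt, subset_of_mem_nhdsSet hV fun j _ ↦ ⟨rayZero_le _, min_le_right _ _⟩⟩
  have : z < f (diagPoint J t fun j ↦ min (y j) m) := hUV hmem
  exact (hy ▸ this).not_ge hyz

/-- A countable family of approximate solutions of the partition condition yields a solution. -/
lemma sSup_mem_partition {n : ℕ} {f : (Fin n → LongRay) → LongRay} (hf : Continuous f)
    {I : Finset (Fin n)} {T : Set Ordinal} (hT : ∀ o ∈ T, o < Omega1)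
    (hc : T.Countable) (hn : T.Nonempty)
    (hplus : ∀ o ∈ T, ∀ x ∈ APlus n I (ordR (sSup T)), ordR o ≤ f x)
    (hminus : ∀ o ∈ T, ∀ x ∈ AMinus n I (ordR o), f x ≤ ordR (sSup T)) :
    sSup T ∈ {α : Ordinal | α < Omega1 ∧
        (∀ x ∈ APlus n I (ordR α), ordR α ≤ f x) ∧
        (∀ x ∈ AMinus n I (ordR α), f x ≤ ordR α)} := by
  have hlub := isLUB_ordR_sSup hT hc hn
  refine ⟨sSup_lt_Omega1 hT hc, fun x hx ↦ hlub.2 (forall_mem_image.2 fun o ho ↦ hplus o ho x hx),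
    fun x hx ↦ ?_⟩
  have htrunc : Continuous fun d ↦ f fun j ↦ min (x j) d := hf.comp (by fun_prop)
  have hsub : ordR '' T ⊆ {d | f (fun j ↦ min (x j) d) ≤ ordR (sSup T)} := by
    refine image_subset_iff.2 fun o ho ↦ hminus o ho _ ⟨fun i _ ↦ min_le_right _ _, fun j ↦ ?_⟩
    obtain ⟨i, hi, hji⟩ := hx.2 j
    exact ⟨i, hi, min_le_min_right _ hji⟩
  have hmem := closure_minimal hsub (isClosed_le htrunc continuous_const)
    (hlub.mem_closure (hn.image _))
  have hxe : (fun j ↦ min (x j) (ordR (sSup T))) = x := by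
    funext j
    obtain ⟨i, hi, hji⟩ := hx.2 j
    exact min_eq_left (hji.trans (hx.1 i hi))
  simpa only [mem_ofPred_eq, hxe] using hmem

end

/-- if `f` is `I`-cofinal, the set of `α < ω₁` with
`f(A_I^+(α)) ⊆ [α,ω₁)` and `f(A_I^-(α)) ⊆ [0,α]` is closed and unbounded in `ω₁`. -/
theorem partition_lemma (n : ℕ) (f : (Fin n → LongRay) → LongRay)
    (hf : Continuous f) (I : Finset (Fin n)) (hI : I.Nonempty)
    (hcof : ICofinal n f I) :
    (∀ a < Omega1, ∃ b ∈ {α : Ordinal | α < Omega1 ∧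
        (∀ x ∈ APlus n I (ordR α), ordR α ≤ f x) ∧
        (∀ x ∈ AMinus n I (ordR α), f x ≤ ordR α)}, a ≤ b) ∧
    (∀ T ⊆ {α : Ordinal | α < Omega1 ∧
        (∀ x ∈ APlus n I (ordR α), ordR α ≤ f x) ∧
        (∀ x ∈ AMinus n I (ordR α), f x ≤ ordR α)},
      T.Countable → T.Nonempty →
        sSup T ∈ {α : Ordinal | α < Omega1 ∧
          (∀ x ∈ APlus n I (ordR α), ordR α ≤ f x) ∧
          (∀ x ∈ AMinus n I (ordR α), f x ≤ ordR α)}) := by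
  refine ⟨fun a ha ↦ ?_, fun T hT hc hn ↦ ?_⟩
  · have hstep : ∀ o < Omega1, ∃ o' < Omega1, o ≤ o' ∧
        (∀ x ∈ APlus n I (ordR o'), ordR o ≤ f x) ∧
        (∀ x ∈ AMinus n I (ordR o), f x ≤ ordR o') := by
      intro o ho
      obtain ⟨b, hb⟩ := (hcof.cofinalAt hf).exists_forall_lt hf (ordR o)
      obtain ⟨M, hM⟩ := exists_forall_le_on_box hf (ordR o)
      obtain ⟨o', ho', hlt⟩ := exists_lt_ordR (max b M)
      have hmax : max o o' < Omega1 := max_lt ho ho'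
      have hle : max b M ≤ ordR (max o o') := hlt.le.trans (ordR_le_ordR (le_max_right _ _) hmax)
      refine ⟨max o o', hmax, le_max_left _ _, fun x hx ↦ (hb x fun i hi ↦ ?_).le, fun x hx ↦ ?_⟩
      · exact (le_max_left _ _).trans (hle.trans (hx.1 i hi))
      · refine (hM x fun j ↦ ?_).trans ((le_max_right _ _).trans hle)
        obtain ⟨i, hi, hji⟩ := hx.2 j
        exact hji.trans (hx.1 i hi)
    choose! g hg hle hplus hminus using hstep
    have hT : ∀ k, g^[k] a < Omega1 := fun k ↦ by
      induction k with
      | zero => exact ha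
      | succ k ih => rw [Function.iterate_succ_apply']; exact hg _ ih
    have hT' : ∀ o ∈ range fun k ↦ g^[k] a, o < Omega1 := forall_mem_range.2 hT
    have hc := countable_range fun k ↦ g^[k] a
    have hlt := sSup_lt_Omega1 hT' hc
    have hb : BddAbove (range fun k ↦ g^[k] a) := ⟨Omega1, fun o ho ↦ (hT' o ho).le⟩
    have hnext : ∀ k, ordR (g (g^[k] a)) ≤ ordR (sSup (range fun k ↦ g^[k] a)) := fun k ↦
      ordR_le_ordR (le_csSup hb ⟨k + 1, Function.iterate_succ_apply' g k a⟩) hlt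
    refine ⟨_, sSup_mem_partition hf hT' hc (range_nonempty _) ?_ ?_, le_csSup hb ⟨0, rfl⟩⟩
    · rintro _ ⟨k, rfl⟩ x hx
      exact hplus _ (hT k) x ⟨fun i hi ↦ (hnext k).trans (hx.1 i hi), hx.2⟩
    · rintro _ ⟨k, rfl⟩ x hx
      exact (hminus _ (hT k) x hx).trans (hnext k)
  · have hT' : ∀ o ∈ T, o < Omega1 := fun o ho ↦ (hT ho).1
    have hle : ∀ o ∈ T, ordR o ≤ ordR (sSup T) := fun o ho ↦
      (isLUB_ordR_sSup hT' hc hn).1 (mem_image_of_mem _ ho)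
    refine sSup_mem_partition hf hT' hc hn (fun o ho x hx ↦ ?_) fun o ho x hx ↦ ?_
    · exact (hT ho).2.1 x ⟨fun i hi ↦ (hle o ho).trans (hx.1 i hi), hx.2⟩
    · exact ((hT ho).2.2 x hx).trans (hle o ho)
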